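/- Every finite simple type system on Ω is either nuclear, atomic binuclear, or atomic quasinuclear. -/

import Mathlib

/-!
The argument rests on a dichotomy (`dichotomy`): in a simple type system, a nonempty child-closed
set `S` of types either is a single type or contains every sufficiently long address. To see this,
collapse `S` to a point and pass to the reduced closure: `α` and `β` become equivalent when, for
all long `γ`, the addresses `αγ` and `βγ` are equivalent or both in `S`. This is a quotient. If it
is the original system, then `S` is a single type. If it is universal, comparing the empty address
with an address in `S` shows that all long addresses lie in `S`.

Call an address fixed if it is equivalent to both of its children; the class of a fixed address is
a singleton nucleus. If `α` is not fixed, its proper descendants do not form a single type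
(otherwise reducedness would make `α` fixed), so by the dichotomy every long address is equivalent
to a proper descendant of `α`; as there are finitely many types, the length bound can be chosen
uniformly.

* If there are two inequivalent fixed addresses, the union of their classes contains all long
  addresses, and the system is atomic binuclear.
* Otherwise the fixed addresses form at most one type `R`. Let `Q` be the set of non-fixed types
  that contain a long address. By the previous paragraph, `Q` is strongly connected and `Q ∪ R`
  contains all long addresses. If `Q` or `R` is empty the system is nuclear, and otherwise it is
  atomic quasinuclear.
-/

/-- Addresses: finite words over the alphabet `{0,1}` (`Bool`). -/
abbrev Addr : Type := List Bool

/-- Cantor space: infinite words over the alphabet `{0,1}`. -/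
abbrev Cantor : Type := ℕ → Bool

/-- Prepend the finite word `α` to the infinite word `w`. -/
def wcat (α : Addr) (w : Cantor) : Cantor := fun n =>
  if h : n < α.length then α.get ⟨n, h⟩ else w (n - α.length)

/-- The cone of the address `α`: the set of infinite words having `α` as a prefix. -/
def cone (α : Addr) : Set Cantor := Set.range (wcat α)

/-- `g` is a prefix substitution map: there are partitions of Cantor space into cones
`(A i)𝔠` and `(B i)𝔠` such that `g` maps `(A i) w` to `(B i) w`. -/
def IsPrefixSubst (g : Equiv.Perm Cantor) : Prop :=
  ∃ (n : ℕ) (A B : Fin n → Addr),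
    (∀ i j, i ≠ j → Disjoint (cone (A i)) (cone (A j))) ∧
    (⋃ i, cone (A i)) = Set.univ ∧
    (∀ i j, i ≠ j → Disjoint (cone (B i)) (cone (B j))) ∧
    (⋃ i, cone (B i)) = Set.univ ∧
    (∀ i w, g (wcat (A i) w) = wcat (B i) w)

/-- Thompson's group `V`, as the set of prefix substitution maps inside `Equiv.Perm Cantor`. -/
def VSet : Set (Equiv.Perm Cantor) := { g | IsPrefixSubst g }

/-- `α ^ g = β` : `g` maps the cone of `α` onto the cone of `β` by the prefix
substitution `α ↦ β`. -/
def actsOn (g : Equiv.Perm Cantor) (α β : Addr) : Prop :=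
  ∀ w, g (wcat α w) = wcat β w

/-- A subset of `Equiv.Perm Cantor` that is closed under the group operations. -/
def IsSubgroupSet (M : Set (Equiv.Perm Cantor)) : Prop :=
  (1 : Equiv.Perm Cantor) ∈ M ∧ (∀ g ∈ M, ∀ h ∈ M, g * h ∈ M) ∧ ∀ g ∈ M, g⁻¹ ∈ M

/-- `M` is a maximal subgroup of Thompson's group `V`. -/
def IsMaximalSubgroupOfV (M : Set (Equiv.Perm Cantor)) : Prop :=
  IsSubgroupSet M ∧ M ⊆ VSet ∧ M ≠ VSet ∧
    ∀ H : Set (Equiv.Perm Cantor),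
      IsSubgroupSet H → M ⊆ H → H ⊆ VSet → H = M ∨ H = VSet

/-- A relation on addresses is coherent if `α ∼ β` implies `α0 ∼ β0` and `α1 ∼ β1`. -/
def Coherent (r : Addr → Addr → Prop) : Prop :=
  ∀ α β, r α β → r (α ++ [false]) (β ++ [false]) ∧ r (α ++ [true]) (β ++ [true])

/-- A relation on addresses is reduced if `α0 ∼ β0` and `α1 ∼ β1` imply `α ∼ β`. -/
def Reduced (r : Addr → Addr → Prop) : Prop :=
  ∀ α β, r (α ++ [false]) (β ++ [false]) → r (α ++ [true]) (β ++ [true]) → r α β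

/-- A type system: a coherent and reduced equivalence relation on addresses
(identified with the partition of `Ω` into its classes). -/
def IsTypeSystem (r : Addr → Addr → Prop) : Prop :=
  Equivalence r ∧ Coherent r ∧ Reduced r

/-- `g` fixes the parts of `r`: for all but finitely many addresses `α`, the image
`α ^ g` is defined and equivalent to `α`. -/
def FixesParts (r : Addr → Addr → Prop) (g : Equiv.Perm Cantor) : Prop :=
  { α : Addr | ¬ ∃ β, actsOn g α β ∧ r α β }.Finite

/-- `g` stabilizes `r`: on some cofinite set of addresses, `α ^ g` is defined and `g`
preserves equivalence and inequivalence of addresses. -/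
def Stabilizes (r : Addr → Addr → Prop) (g : Equiv.Perm Cantor) : Prop :=
  ∃ Ω₀ : Set Addr, Ω₀ᶜ.Finite ∧ (∀ α ∈ Ω₀, ∃ β, actsOn g α β) ∧
    ∀ α ∈ Ω₀, ∀ α' ∈ Ω₀, ∀ β β', actsOn g α β → actsOn g α' β' → (r α α' ↔ r β β')

/-- `Fix_V(𝒫)`: the elements of Thompson's group `V` fixing the parts of `r`. -/
def FixSet (r : Addr → Addr → Prop) : Set (Equiv.Perm Cantor) :=
  { g | IsPrefixSubst g ∧ FixesParts r g }

/-- `Stab_V(𝒫)`: the elements of Thompson's group `V` stabilizing `r`. -/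
def StabSet (r : Addr → Addr → Prop) : Set (Equiv.Perm Cantor) :=
  { g | IsPrefixSubst g ∧ Stabilizes r g }

/-- The type system of `s` is a quotient of that of `r`. -/
def IsQuotientOf (s r : Addr → Addr → Prop) : Prop :=
  IsTypeSystem s ∧ ∀ α β, r α β → s α β

/-- A simple type system: the universal relation is a proper quotient, and every
quotient is either the type system itself or the universal one. -/
def SimpleTS (r : Addr → Addr → Prop) : Prop :=
  IsTypeSystem r ∧ (∃ α β : Addr, ¬ r α β) ∧
    ∀ s : Addr → Addr → Prop, IsQuotientOf s r →
      (∀ α β, s α β ↔ r α β) ∨ ∀ α β, s α β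

/-- The type (equivalence class) of the address `α`. -/
def typeOf (r : Addr → Addr → Prop) (α : Addr) : Set Addr := { β | r α β }

/-- `S` is a union of `r`-classes, i.e. a set of types of the type system. -/
def Saturated (r : Addr → Addr → Prop) (S : Set Addr) : Prop :=
  ∀ α ∈ S, ∀ β, r α β → β ∈ S

/-- `S` is child-closed: with each address (type) it contains both of its children. -/
def ChildClosed (S : Set Addr) : Prop :=
  ∀ α ∈ S, α ++ [false] ∈ S ∧ α ++ [true] ∈ S

/-- The word `γ` determines a path through `S` from (the type of) `α`. -/
def PathThrough (S : Set Addr) (α γ : Addr) : Prop :=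
  ∀ ζ : Addr, ζ <+: γ → α ++ ζ ∈ S

/-- `S` is strongly connected. -/
def StronglyConnected (r : Addr → Addr → Prop) (S : Set Addr) : Prop :=
  ∀ α ∈ S, ∀ β ∈ S, ∃ γ : Addr, γ ≠ [] ∧ PathThrough S α γ ∧ r (α ++ γ) β

/-- A nucleus: a (nonempty) child-closed and strongly connected set of types. -/
def IsNucleus (r : Addr → Addr → Prop) (S : Set Addr) : Prop :=
  S.Nonempty ∧ Saturated r S ∧ ChildClosed S ∧ StronglyConnected r S

/-- `S` consists of exactly one type. -/
def IsSingleType (r : Addr → Addr → Prop) (S : Set Addr) : Prop :=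
  ∃ α : Addr, S = typeOf r α

/-- A multinuclear type system: finitely many pairwise disjoint nuclei containing the
types of all sufficiently long addresses. -/
def Multinuclear (r : Addr → Addr → Prop) : Prop :=
  ∃ (k : ℕ) (Q : Fin k → Set Addr), 0 < k ∧ (∀ i, IsNucleus r (Q i)) ∧
    (∀ i j, i ≠ j → Disjoint (Q i) (Q j)) ∧
    ∃ t : ℕ, 0 < t ∧ ∀ α : Addr, t ≤ α.length → ∃ i, α ∈ Q i

/-- A nuclear type system: a single nucleus containing the types of all sufficiently
long addresses. -/
def Nuclear (r : Addr → Addr → Prop) : Prop :=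
  ∃ Q : Set Addr, IsNucleus r Q ∧ ∃ t : ℕ, 0 < t ∧ ∀ α : Addr, t ≤ α.length → α ∈ Q

/-- An atomic binuclear type system: two disjoint singleton nuclei containing the types
of all sufficiently long addresses. -/
def AtomicBinuclear (r : Addr → Addr → Prop) : Prop :=
  ∃ Q₁ Q₂ : Set Addr, IsNucleus r Q₁ ∧ IsNucleus r Q₂ ∧ Disjoint Q₁ Q₂ ∧
    IsSingleType r Q₁ ∧ IsSingleType r Q₂ ∧
    ∃ t : ℕ, 0 < t ∧ ∀ α : Addr, t ≤ α.length → α ∈ Q₁ ∪ Q₂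

/-- The data `(𝒬, ℛ)` witnessing that a type system is quasinuclear. -/
def QuasinuclearData (r : Addr → Addr → Prop) (Q R : Set Addr) : Prop :=
  Q.Nonempty ∧ R.Nonempty ∧ Saturated r Q ∧ Saturated r R ∧ Disjoint Q R ∧
    (∃ t : ℕ, 0 < t ∧ ∀ α : Addr, t ≤ α.length → α ∈ Q ∪ R) ∧
    IsNucleus r R ∧ StronglyConnected r Q ∧ ChildClosed (Q ∪ R) ∧
    ∀ α ∈ Q, ∀ β ∈ R, ∃ γ : Addr, r (α ++ γ) β

/-- A quasinuclear type system. -/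
def Quasinuclear (r : Addr → Addr → Prop) : Prop :=
  ∃ Q R : Set Addr, QuasinuclearData r Q R

/-- `𝒬†`: the types of `𝒬` both of whose children lie in `𝒬`. -/
def QDagger (Q : Set Addr) : Set Addr :=
  { α ∈ Q | α ++ [false] ∈ Q ∧ α ++ [true] ∈ Q }

/-- An atomic quasinuclear type system: the nucleus `ℛ` is a single type. -/
def AtomicQuasinuclear (r : Addr → Addr → Prop) : Prop :=
  ∃ Q R : Set Addr, QuasinuclearData r Q R ∧ IsSingleType r R


/-- An address equivalent to both of its children. -/
def FixedAddr (r : Addr → Addr → Prop) (α : Addr) : Prop :=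
  r (α ++ [false]) α ∧ r (α ++ [true]) α

/-- The union of the types of the proper descendants of `α`. -/
def ProperDesc (r : Addr → Addr → Prop) (α : Addr) : Set Addr :=
  { β | ∃ γ : Addr, γ ≠ [] ∧ r (α ++ γ) β }

theorem Coherent.append {r : Addr → Addr → Prop} (hc : Coherent r) :
    ∀ (γ α β : Addr), r α β → r (α ++ γ) (β ++ γ)
  | [], α, β, h => by simpa using h
  | b :: γ, α, β, h => by
    have h1 : r (α ++ [b]) (β ++ [b]) := by
      cases b
      · exact (hc α β h).1
      · exact (hc α β h).2
    simpa using Coherent.append hc γ _ _ h1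

theorem ChildClosed.append {S : Set Addr} (hS : ChildClosed S) :
    ∀ (γ α : Addr), α ∈ S → α ++ γ ∈ S
  | [], α, h => by simpa using h
  | b :: γ, α, h => by
    have h1 : α ++ [b] ∈ S := by
      cases b
      · exact (hS α h).1
      · exact (hS α h).2
    simpa using ChildClosed.append hS γ _ h1

/-- In a simple type system, a nonempty child-closed set of types is a single type or contains all
sufficiently long addresses. -/
theorem dichotomy {r : Addr → Addr → Prop} (hr : SimpleTS r) {S : Set Addr}
    (hne : S.Nonempty) (hsat : Saturated r S) (hS : ChildClosed S) :
    (∀ α ∈ S, ∀ β ∈ S, r α β) ∨ ∃ t : ℕ, ∀ α : Addr, t ≤ α.length → α ∈ S := by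
  obtain ⟨⟨he, hc, -⟩, -, hsimple⟩ := hr
  have hq : IsQuotientOf (fun α β => ∃ n : ℕ, ∀ γ : Addr, n ≤ γ.length →
      r (α ++ γ) (β ++ γ) ∨ (α ++ γ ∈ S ∧ β ++ γ ∈ S)) r := by
    refine ⟨⟨⟨fun α => ⟨0, fun γ _ => Or.inl (he.refl _)⟩, ?_, ?_⟩, ?_, ?_⟩, ?_⟩
    · rintro α β ⟨n, h⟩
      refine ⟨n, fun γ hγ => ?_⟩
      rcases h γ hγ with h | h
      · exact Or.inl (he.symm h)
      · exact Or.inr ⟨h.2, h.1⟩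
    · rintro α β δ ⟨n, h⟩ ⟨m, h'⟩
      refine ⟨max n m, fun γ hγ => ?_⟩
      rcases h γ (by omega) with h | h <;> rcases h' γ (by omega) with h' | h'
      · exact Or.inl (he.trans h h')
      · exact Or.inr ⟨hsat _ h'.1 _ (he.symm h), h'.2⟩
      · exact Or.inr ⟨h.1, hsat _ h.2 _ h'⟩
      · exact Or.inr ⟨h.1, h'.2⟩
    · rintro α β ⟨n, h⟩
      refine ⟨⟨n, fun γ hγ => ?_⟩, ⟨n, fun γ hγ => ?_⟩⟩
      · simpa using h (false :: γ) (by simp; omega)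
      · simpa using h (true :: γ) (by simp; omega)
    · rintro α β ⟨n, h⟩ ⟨m, h'⟩
      refine ⟨max n m + 1, fun γ hγ => ?_⟩
      match γ, hγ with
      | [], hγ => simp at hγ
      | false :: γ, hγ =>
        simp only [List.length_cons] at hγ
        simpa using h γ (by omega)
      | true :: γ, hγ =>
        simp only [List.length_cons] at hγ
        simpa using h' γ (by omega)
    · exact fun α β h => ⟨0, fun γ _ => Or.inl (hc.append γ _ _ h)⟩
  rcases hsimple _ hq with h | h
  · exact Or.inl fun α hα β hβ =>
      (h α β).1 ⟨0, fun γ _ => Or.inr ⟨hS.append γ α hα, hS.append γ β hβ⟩⟩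
  · obtain ⟨β, hβ⟩ := hne
    obtain ⟨n, hn⟩ := h [] β
    refine Or.inr ⟨n, fun α hα => ?_⟩
    rcases hn α hα with h | h
    · exact hsat _ (hS.append α β hβ) _ (he.symm h)
    · exact h.1

section

variable {r : Addr → Addr → Prop}

theorem FixedAddr.of_equiv (hr : IsTypeSystem r) {α β : Addr} (hα : FixedAddr r α)
    (h : r α β) : FixedAddr r β := by
  obtain ⟨he, hc, -⟩ := hr
  exact ⟨he.trans (he.symm (hc _ _ h).1) (he.trans hα.1 h),
    he.trans (he.symm (hc _ _ h).2) (he.trans hα.2 h)⟩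

theorem childClosed_fixed (hr : IsTypeSystem r) : ChildClosed { α | FixedAddr r α } :=
  fun _ hα => ⟨FixedAddr.of_equiv hr hα (hr.1.symm hα.1),
    FixedAddr.of_equiv hr hα (hr.1.symm hα.2)⟩

theorem FixedAddr.isNucleus (hr : IsTypeSystem r) {α : Addr} (hα : FixedAddr r α) :
    IsNucleus r (typeOf r α) := by
  have he := hr.1
  have hcc : ChildClosed (typeOf r α) := fun β (hβ : r α β) =>
    have hf := hα.of_equiv hr hβ
    ⟨he.trans hβ (he.symm hf.1), he.trans hβ (he.symm hf.2)⟩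
  refine ⟨⟨α, he.refl α⟩, fun β (hβ : r α β) δ h => he.trans hβ h, hcc, ?_⟩
  intro β hβ δ hδ
  exact ⟨[false], by simp, fun ζ _ => hcc.append ζ β hβ,
    he.trans (he.symm (hcc β hβ).1) hδ⟩

/-- Every long address is equivalent to a proper descendant of a given non-fixed address. -/
theorem properDesc_of_not_fixed (hr : SimpleTS r) {α : Addr} (hα : ¬ FixedAddr r α) :
    ∃ t : ℕ, ∀ β : Addr, t ≤ β.length → β ∈ ProperDesc r α := by
  obtain ⟨he, hc, hred⟩ := hr.1
  have mem : ∀ γ : Addr, γ ≠ [] → α ++ γ ∈ ProperDesc r α := fun γ h => ⟨γ, h, he.refl _⟩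
  have hsat : Saturated r (ProperDesc r α) := by
    rintro β ⟨γ, hγ, h⟩ δ hδ
    exact ⟨γ, hγ, he.trans h hδ⟩
  have hcc : ChildClosed (ProperDesc r α) := by
    rintro β ⟨γ, hγ, h⟩
    exact ⟨⟨γ ++ [false], by simp, by simpa using (hc _ _ h).1⟩,
      ⟨γ ++ [true], by simp, by simpa using (hc _ _ h).2⟩⟩
  refine (dichotomy hr ⟨_, mem [false] (by simp)⟩ hsat hcc).resolve_left fun hall => hα ?_
  have m0 := mem [false] (by simp)
  have m1 := mem [true] (by simp)
  -- `α0` and `α` have equivalent children, all being proper descendants of `α`.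
  have h0 : r (α ++ [false]) α := hred _ _ (hall _ (hcc _ m0).1 _ m0) (hall _ (hcc _ m0).2 _ m1)
  exact ⟨h0, he.trans (hall _ m1 _ m0) h0⟩

/-- Finiteness makes the length bound of `properDesc_of_not_fixed` uniform. -/
theorem uniform_bound (hr : SimpleTS r) (hfin : (Set.range (typeOf r)).Finite) :
    ∃ t : ℕ, ∀ α : Addr, ¬ FixedAddr r α →
      ∀ β : Addr, t ≤ β.length → β ∈ ProperDesc r α := by
  obtain ⟨he, hc, -⟩ := hr.1
  have key : ∀ T ∈ Set.range (typeOf r), ∃ t : ℕ, ∀ α : Addr, typeOf r α = T →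
      ¬ FixedAddr r α → ∀ β : Addr, t ≤ β.length → β ∈ ProperDesc r α := by
    rintro _ ⟨α, rfl⟩
    by_cases hα : FixedAddr r α
    · refine ⟨0, fun δ hδ hnf => absurd (hα.of_equiv hr.1 ?_) hnf⟩
      have : δ ∈ typeOf r α := hδ ▸ he.refl δ
      exact this
    · obtain ⟨t, ht⟩ := properDesc_of_not_fixed hr hα
      refine ⟨t, fun δ hδ _ β hβ => ?_⟩
      obtain ⟨γ, hγ, h⟩ := ht β hβ
      have hδα : r δ α := by
        have : α ∈ typeOf r δ := hδ ▸ he.refl α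
        exact this
      exact ⟨γ, hγ, he.trans (hc.append γ _ _ hδα) h⟩
  choose! f hf using key
  obtain ⟨t, ht⟩ := (hfin.image f).bddAbove
  refine ⟨t, fun α hα β hβ => hf (typeOf r α) ⟨α, rfl⟩ α rfl hα β ?_⟩
  exact (ht ⟨_, ⟨α, rfl⟩, rfl⟩).trans hβ

/-- Two inequivalent fixed addresses force the system to be atomic binuclear. -/
theorem atomicBinuclear_of_two_fixed (hr : SimpleTS r) {α β : Addr} (hα : FixedAddr r α)
    (hβ : FixedAddr r β) (hαβ : ¬ r α β) : AtomicBinuclear r := by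
  have he := hr.1.1
  have hA := hα.isNucleus hr.1
  have hB := hβ.isNucleus hr.1
  have hsat : Saturated r (typeOf r α ∪ typeOf r β) := by
    rintro γ (hγ | hγ) δ hδ
    · exact Or.inl (hA.2.1 γ hγ δ hδ)
    · exact Or.inr (hB.2.1 γ hγ δ hδ)
  have hcc : ChildClosed (typeOf r α ∪ typeOf r β) := by
    rintro γ (hγ | hγ)
    · exact ⟨Or.inl (hA.2.2.1 γ hγ).1, Or.inl (hA.2.2.1 γ hγ).2⟩
    · exact ⟨Or.inr (hB.2.2.1 γ hγ).1, Or.inr (hB.2.2.1 γ hγ).2⟩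
  have hmα : α ∈ typeOf r α ∪ typeOf r β := Or.inl (he.refl α)
  have hmβ : β ∈ typeOf r α ∪ typeOf r β := Or.inr (he.refl β)
  obtain ⟨t, ht⟩ := (dichotomy hr ⟨α, hmα⟩ hsat hcc).resolve_left
    fun h => hαβ (h α hmα β hmβ)
  refine ⟨_, _, hA, hB, ?_, ⟨α, rfl⟩, ⟨β, rfl⟩, t + 1, by omega, fun γ hγ => ht γ (by omega)⟩
  rw [Set.disjoint_left]
  exact fun γ (h1 : r α γ) (h2 : r β γ) => hαβ (he.trans h1 (he.symm h2))

end

/-- A finite simple type system is nuclear, atomic binuclear, or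
atomic quasinuclear. -/
theorem finite_simple_type_system_classification
    (r : Addr → Addr → Prop) (hr : SimpleTS r)
    (hfin : (Set.range (typeOf r)).Finite) :
    Nuclear r ∨ AtomicBinuclear r ∨ AtomicQuasinuclear r := by
  have he := hr.1.1
  have hc := hr.1.2.1
  by_cases htwo : ∃ α β, FixedAddr r α ∧ FixedAddr r β ∧ ¬ r α β
  · obtain ⟨α, β, hα, hβ, h⟩ := htwo
    exact Or.inr (Or.inl (atomicBinuclear_of_two_fixed hr hα hβ h))
  push Not at htwo
  obtain ⟨t, ht⟩ := uniform_bound hr hfin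
  set R : Set Addr := { α | FixedAddr r α }
  set Q : Set Addr := { α | ¬ FixedAddr r α ∧ ∃ β : Addr, t ≤ β.length ∧ r β α }
  have hRsat : Saturated r R := fun α hα β h => FixedAddr.of_equiv hr.1 hα h
  have hRcc : ChildClosed R := childClosed_fixed hr.1
  have hQsat : Saturated r Q := fun α hα β h =>
    ⟨fun hβ => hα.1 (hβ.of_equiv hr.1 (he.symm h)),
      hα.2.imp fun δ hδ => ⟨hδ.1, he.trans hδ.2 h⟩⟩
  have hlong : ∀ α : Addr, t + 1 ≤ α.length → α ∈ Q ∪ R := by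
    intro α hα
    by_cases h : FixedAddr r α
    · exact Or.inr h
    · exact Or.inl ⟨h, α, by omega, he.refl α⟩
  have hQdesc : ∀ α ∈ Q, ∀ γ : Addr, ¬ FixedAddr r (α ++ γ) → α ++ γ ∈ Q := by
    rintro α ⟨-, β, hβ, h⟩ γ hγ
    exact ⟨hγ, β ++ γ, by simp; omega, hc.append γ _ _ h⟩
  have hQRcc : ChildClosed (Q ∪ R) := by
    have step : ∀ α ∈ Q ∪ R, ∀ γ : Addr, α ++ γ ∈ Q ∪ R := by
      rintro α (hα | hα) γ
      · by_cases h : FixedAddr r (α ++ γ)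
        · exact Or.inr h
        · exact Or.inl (hQdesc α hα γ h)
      · exact Or.inr (hRcc.append γ α hα)
    exact fun α hα => ⟨step α hα _, step α hα _⟩
  have hQsc : StronglyConnected r Q := by
    rintro α hα β ⟨hβ, δ, hδ, hδβ⟩
    obtain ⟨γ, hγ, h⟩ := ht α hα.1 δ hδ
    have hγβ : r (α ++ γ) β := he.trans h hδβ
    refine ⟨γ, hγ, ?_, hγβ⟩
    -- A path that enters `R` stays there, so a path ending at the non-fixed `β` avoids `R`.
    rintro ζ ⟨η, rfl⟩
    refine hQdesc α hα ζ fun hζ => hβ (FixedAddr.of_equiv hr.1 ?_ hγβ)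
    have : FixedAddr r ((α ++ ζ) ++ η) := hRcc.append η _ hζ
    simpa using this
  by_cases hRne : R.Nonempty
  · obtain ⟨ρ, hρ⟩ := hRne
    have hRtype : R = typeOf r ρ := by
      ext β
      exact ⟨fun hβ => htwo ρ β hρ hβ, fun hβ => hRsat ρ hρ β hβ⟩
    have hRnuc : IsNucleus r R := hRtype ▸ FixedAddr.isNucleus hr.1 hρ
    by_cases hQne : Q.Nonempty
    · refine Or.inr (Or.inr ⟨Q, R, ⟨hQne, ⟨ρ, hρ⟩, hQsat, hRsat, ?_,
        ⟨t + 1, by omega, hlong⟩, hRnuc, hQsc, hQRcc, ?_⟩, ρ, hRtype⟩)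
      · rw [Set.disjoint_left]
        exact fun α hα hα' => hα.1 hα'
      · intro α hα β hβ
        -- A long descendant of `β` is fixed, hence equivalent to `β`.
        have hmem : β ++ List.replicate t false ∈ R := hRcc.append _ β hβ
        obtain ⟨γ, -, h⟩ := ht α hα.1 (β ++ List.replicate t false) (by simp)
        exact ⟨γ, he.trans h (htwo _ _ hmem hβ)⟩
    · rw [Set.not_nonempty_iff_eq_empty] at hQne
      refine Or.inl ⟨R, hRnuc, t + 1, by omega, fun α hα => ?_⟩
      simpa [hQne] using hlong α hα
  · rw [Set.not_nonempty_iff_eq_empty] at hRne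
    rw [hRne, Set.union_empty] at hlong hQRcc
    exact Or.inl ⟨Q, ⟨⟨_, hlong (List.replicate (t + 1) false) (by simp)⟩, hQsat, hQRcc, hQsc⟩,
      t + 1, by omega, hlong⟩
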